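/- arXiv:1506.00034 — 2 statements merged into one kernel-verified Lean document; each statement's English description precedes it below -/
import Mathlib

section
/- For every integer d ≥ 1 there exist positive constants c_d and ε_{0,d} such that for every R > 0 and every 0 < ε ≤ ε_{0,d} R, the family K^{d+1}(R) of all closed convex subsets of the closed Euclidean ball of radius R centered at 0 in ℝ^{d+1} admits an ε-cover in the Hausdorff distance of cardinality at most exp( c_d (R/ε)^{d/2} ); that is, there exist sets V_1,…,V_N ⊆ ℝ^{d+1} with N ≤ exp(c_d (R/ε)^{d/2}) such that every K ∈ K^{d+1}(R) satisfies d_H(K, V_i) ≤ ε for some i. -/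
open MeasureTheory Real

/-- The ε-bracketing number of a class `F` of real-valued functions, where brackets are
required to hold pointwise on `dom` and their size is measured by `size`. It is `⊤`
if no finite collection of brackets covers `F`. -/
noncomputable def bracketN {α : Type*} (ε : ℝ) (F : Set (α → ℝ)) (dom : Set α)
    (size : (α → ℝ) → ℝ) : ℕ∞ :=
  sInf {N : ℕ∞ | ∃ n : ℕ, (n : ℕ∞) = N ∧ ∃ l u : Fin n → α → ℝ,
    (∀ i, size (fun x => u i x - l i x) ≤ ε) ∧
    ∀ f ∈ F, ∃ i, ∀ x ∈ dom, l i x ≤ f x ∧ f x ≤ u i x}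

/-- The `L_p` size of a function over a domain `dom`, w.r.t. Lebesgue measure. -/
noncomputable def LpSize {d : ℕ} (p : ℝ) (dom : Set (EuclideanSpace ℝ (Fin d)))
    (g : EuclideanSpace ℝ (Fin d) → ℝ) : ℝ :=
  (∫ x in dom, |g x| ^ p) ^ (1 / p)

/-- The sup (`L_∞`) size of a function over a domain `dom`. -/
noncomputable def LinfSize {α : Type*} (dom : Set α) (g : α → ℝ) : ℝ :=
  sSup ((fun x => |g x|) '' dom)

/-- The class `C(D, B)` of convex functions on `D` bounded in absolute value by `B`. -/
def convexClass {d : ℕ} (D : Set (EuclideanSpace ℝ (Fin d))) (B : ℝ) :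
    Set (EuclideanSpace ℝ (Fin d) → ℝ) :=
  {f | ConvexOn ℝ D f ∧ ∀ x ∈ D, |f x| ≤ B}

/-- The class `C(D, B, Γ)` of convex functions on `D` bounded in absolute value by `B` and
with Lipschitz constant `Γ i` in the `i`-th coordinate direction. -/
def convexLipClass {d : ℕ} (D : Set (EuclideanSpace ℝ (Fin d))) (B : ℝ) (Γ : Fin d → ℝ) :
    Set (EuclideanSpace ℝ (Fin d) → ℝ) :=
  {f | ConvexOn ℝ D f ∧ (∀ x ∈ D, |f x| ≤ B) ∧
    ∀ i : Fin d, ∀ x ∈ D, ∀ l : ℝ, x + l • (EuclideanSpace.single i (1:ℝ)) ∈ D →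
      |f (x + l • EuclideanSpace.single i (1:ℝ)) - f x| ≤ Γ i * |l|}

section Core
variable {V : Type*} [NormedAddCommGroup V] [InnerProductSpace ℝ V]

/-- `p` is the metric projection of `y` on `K`. -/
def IsPr (K : Set V) (y p : V) : Prop := p ∈ K ∧ ∀ x ∈ K, inner ℝ (y - p) (x - p) ≤ 0

theorem IsPr.exists' [CompleteSpace V] {K : Set V} (hne : K.Nonempty) (hc : IsClosed K)
    (hK : Convex ℝ K) (y : V) : ∃ p, IsPr K y p := by
  obtain ⟨p, hp, h⟩ := exists_norm_eq_iInf_of_complete_convex hne hc.isComplete hK y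
  exact ⟨p, hp, (norm_eq_iInf_iff_real_inner_le_zero hK hp).1 h⟩

theorem IsPr.lip {K : Set V} {y z p q : V} (hp : IsPr K y p) (hq : IsPr K z q) :
    ‖p - q‖ ≤ ‖y - z‖ := by
  have h1 := hp.2 q hq.1
  have h2 := hq.2 p hp.1
  have h3 : inner ℝ (y - p) (q - p) + inner ℝ (z - q) (p - q)
      = inner ℝ (p - q) (p - q) - inner ℝ (y - z) (p - q) := by
    simp only [inner_sub_left, inner_sub_right]; ring
  have h4 := real_inner_le_norm (y - z) (p - q)
  rw [real_inner_self_eq_norm_sq] at h3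
  by_contra! h
  nlinarith [norm_nonneg (y - z), norm_nonneg (p - q)]

theorem IsPr.le {K : Set V} {y p x : V} (hp : IsPr K y p) (hx : x ∈ K) :
    ‖y - p‖ ≤ ‖y - x‖ := by
  have h1 := hp.2 x hx
  have e : y - x = (y - p) - (x - p) := by abel
  have h2 := norm_sub_sq_real (y - p) (x - p)
  rw [← e] at h2
  apply le_of_sq_le_sq _ (norm_nonneg _) |> fun h => h
  nlinarith [sq_nonneg ‖x - p‖]

/-- every point of `K` is within `δ` of `L` -/
def Near (δ : ℝ) (K L : Set V) : Prop := ∀ x ∈ K, ∃ x' ∈ L, ‖x - x'‖ ≤ δ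

theorem stab_dist {K L : Set V} {δ : ℝ} {y p q : V} (hp : IsPr K y p) (hq : IsPr L y q)
    (h : Near δ L K) : ‖y - p‖ ≤ ‖y - q‖ + δ := by
  obtain ⟨q', hq', h'⟩ := h q hq.1
  have := hp.le hq'
  have e : y - q' = (y - q) + (q - q') := by abel
  have := norm_add_le (y - q) (q - q')
  rw [← e] at this
  linarith

theorem stab_half {K L : Set V} {δ D : ℝ} {y p q : V} (hp : IsPr K y p) (hq : IsPr L y q)
    (h : Near δ L K) (hD : ‖y - p‖ ≤ D) : inner ℝ (y - p) (q - p) ≤ D * δ := by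
  obtain ⟨q', hq', h'⟩ := h q hq.1
  have h1 := hp.2 q' hq'
  have e : q - p = (q' - p) + (q - q') := by abel
  rw [e, inner_add_right]
  have h2 := real_inner_le_norm (y - p) (q - q')
  have h3 : ‖y - p‖ * ‖q - q'‖ ≤ D * δ :=
    mul_le_mul hD h' (norm_nonneg _) ((norm_nonneg _).trans hD)
  linarith

theorem stab {K L : Set V} {δ D : ℝ} {y p q : V} (hp : IsPr K y p) (hq : IsPr L y q)
    (h : Near δ L K) (h' : Near δ K L) (hD : ‖y - p‖ ≤ D) (hD' : ‖y - q‖ ≤ D) :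
    ‖p - q‖ ^ 2 ≤ 2 * D * δ := by
  have h1 := stab_half hp hq h hD
  have h2 := stab_half hq hp h' hD'
  have h3 : inner ℝ (y - p) (q - p) + inner ℝ (y - q) (p - q)
      = inner ℝ (p - q) (p - q) := by
    simp only [inner_sub_left, inner_sub_right]; ring
  rw [real_inner_self_eq_norm_sq] at h3
  linarith

/-- The key estimate. -/
theorem key {K L : Set V} {x q v z y p p' : V} {t s ρ D : ℝ} (hx : x ∈ L) (hxs : x = q + s • v)
    (hv : ‖v‖ = 1) (hz : z = q + t • v) (ht : 2 ≤ t) (hs : 0 ≤ s)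
    (hq : IsPr K z q) (hp : IsPr K y p) (hp' : IsPr L y p')
    (hyz : ‖y - z‖ ≤ ρ) (hpp : ‖p - p'‖ ≤ ρ) (hd : ‖y - p‖ ≤ ‖y - p'‖ + ρ ^ 2)
    (hρ : ρ ≤ 1 / 3) (hD : ‖y - p‖ ≤ D) (hD' : ‖y - p'‖ ≤ D) : s ≤ (D + 3) * ρ ^ 2 := by
  have hρ0 : 0 ≤ ρ := (norm_nonneg _).trans hyz
  have hpq : ‖p - q‖ ≤ ρ := (hp.lip hq).trans hyz
  set e : V := (y - z) + (q - p) + (p - p') with he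
  have hw : y - p' = t • v + e := by rw [he, hz]; abel
  have hen : ‖e‖ ≤ 3 * ρ := by
    have := norm_add₃_le (a := y - z) (b := q - p) (c := p - p')
    rw [norm_sub_rev q p] at this
    linarith
  have hvv : inner ℝ v v = (1:ℝ) := by rw [real_inner_self_eq_norm_sq, hv]; norm_num
  have hve : -(3 * ρ) ≤ inner ℝ v e := by
    have := abs_real_inner_le_norm v e
    rw [hv, one_mul] at this
    linarith [neg_abs_le (inner ℝ v e : ℝ)]
  have hvw : 1 ≤ (inner ℝ v (y - p') : ℝ) := by
    rw [hw, inner_add_right, inner_smul_right, hvv]; linarith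
  have h0 := hp'.2 x hx
  have h1 : inner ℝ (y - p') (x - p') = s * inner ℝ v (y - p') - inner ℝ (p' - p) (y - p')
      - inner ℝ (p - q) (y - p') := by
    have : x - p' = s • v - (p' - p) - (p - q) := by rw [hxs]; abel
    rw [this, real_inner_comm, inner_sub_left, inner_sub_left, inner_smul_left]; simp
  have h2 : inner ℝ (p - q) (y - p') ≤ 3 * ρ ^ 2 := by
    rw [hw, inner_add_right]
    have a := hq.2 p hp.1
    have b : z - q = t • v := by rw [hz]; abel
    rw [b, real_inner_comm] at a
    have c := real_inner_le_norm (p - q) e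
    have : ‖p - q‖ * ‖e‖ ≤ ρ * (3 * ρ) := mul_le_mul hpq hen (norm_nonneg _) hρ0
    nlinarith
  have h3 : inner ℝ (p' - p) (y - p') ≤ D * ρ ^ 2 := by
    have e1 : y - p = (y - p') + (p' - p) := by abel
    have a := norm_add_sq_real (y - p') (p' - p)
    rw [← e1, real_inner_comm] at a
    have : (‖y - p‖ - ‖y - p'‖) * (‖y - p‖ + ‖y - p'‖) ≤ ρ ^ 2 * (2 * D) := by
      refine mul_le_mul (by linarith) (by linarith) (by positivity) (by positivity)
    nlinarith [sq_nonneg ‖p' - p‖]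
  nlinarith
end Core

theorem code_exists {W : Type*} [NormedAddCommGroup W] [NormedSpace ℝ W] [FiniteDimensional ℝ W]
    (η : ℝ) (hη : 0 < η) : ∃ (T : ℕ) (c : W → Fin T), 2 ≤ T ∧
      ∀ u v, ‖u‖ ≤ 1 → ‖v‖ ≤ 1 → c u = c v → ‖u - v‖ ≤ η := by
  have : ProperSpace W := FiniteDimensional.proper ℝ W
  have := (isCompact_closedBall (0 : W) 1).totallyBounded
  obtain ⟨t, ht, h⟩ := Metric.totallyBounded_iff.1 this (η / 2) (by positivity)
  have := ht.fintype
  have hc : ∀ u : W, ∃ o : Option (Option t), ‖u‖ ≤ 1 → ∃ a : t, o = some (some a) ∧ dist u a < η / 2 := by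
    intro u
    by_cases hu : ‖u‖ ≤ 1
    · have := h (mem_closedBall_zero_iff.2 hu)
      simp only [Set.mem_iUnion, Metric.mem_ball] at this
      obtain ⟨a, ha, hd⟩ := this
      exact ⟨some (some ⟨a, ha⟩), fun _ => ⟨⟨a, ha⟩, rfl, hd⟩⟩
    · exact ⟨none, fun h => absurd h hu⟩
  choose c hc using hc
  refine ⟨Fintype.card (Option (Option t)), fun u => Fintype.equivFin _ (c u), ?_, ?_⟩
  · simp
  · intro u v hu hv huv
    obtain ⟨a, ha, hd⟩ := hc u hu
    obtain ⟨b, hb, hd'⟩ := hc v hv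
    have : c u = c v := (Fintype.equivFin _).injective huv
    rw [ha, hb] at this
    have : a = b := by simpa using this
    subst this
    rw [← dist_eq_norm]
    linarith [dist_triangle_right u v (a : W)]

theorem norm_le_of_coord {d : ℕ} (x : EuclideanSpace ℝ (Fin (d+1))) (r : ℝ)
    (h : ∀ i, |x i| ≤ r) : ‖x‖ ≤ (d + 1) * r := by
  have hr : 0 ≤ r := (abs_nonneg _).trans (h 0)
  rw [EuclideanSpace.norm_eq]
  apply Real.sqrt_le_iff.2 ⟨by positivity, ?_⟩
  calc ∑ i, ‖x i‖ ^ 2 ≤ ∑ i : Fin (d+1), r ^ 2 := by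
        apply Finset.sum_le_sum; intro i _
        exact pow_le_pow_left₀ (norm_nonneg _) (h i) 2
    _ = (d + 1) * r ^ 2 := by simp
    _ ≤ _ := by nlinarith [mul_nonneg (Nat.cast_nonneg (α := ℝ) d) (sq_nonneg r), mul_nonneg (sq_nonneg (d:ℝ)) (sq_nonneg r)]

theorem grid (m : ℕ) (hm : 0 < m) (a : ℝ) (ha : |a| ≤ 3) :
    ∃ g : Fin m, |(-3 + 6 * (g : ℝ) / m) - a| ≤ 6 / m := by
  have hm' : (0:ℝ) < m := by exact_mod_cast hm
  obtain ⟨h1, h2⟩ := abs_le.1 ha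
  by_cases h : a = 3
  · refine ⟨⟨m - 1, by omega⟩, ?_⟩
    have : ((m - 1 : ℕ) : ℝ) = m - 1 := by rw [Nat.cast_sub hm]; simp
    simp only [this, h]
    have : (-3 + 6 * ((m:ℝ) - 1) / m) - 3 = - (6 / m) := by field_simp; ring
    rw [this, abs_neg, abs_of_pos (by positivity)]
  · have hlt : a < 3 := lt_of_le_of_ne h2 h
    have h0 : 0 ≤ (a + 3) * m / 6 := by
      have : 0 ≤ a + 3 := by linarith
      positivity
    have hf := Nat.floor_le h0
    have hf2 := Nat.lt_floor_add_one ((a + 3) * m / 6)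
    refine ⟨⟨⌊(a + 3) * m / 6⌋₊, ?_⟩, ?_⟩
    · rw [Nat.floor_lt h0]; nlinarith
    · simp only
      set n : ℝ := (⌊(a + 3) * m / 6⌋₊ : ℝ)
      have e : (-3 + 6 * n / m) - a = (6 / m) * (n - (a + 3) * m / 6) := by field_simp; ring
      rw [e, abs_mul, abs_of_pos (by positivity : (0:ℝ) < 6 / m)]
      have : |n - (a + 3) * m / 6| ≤ 1 := by rw [abs_le]; constructor <;> linarith
      have h6 : (0:ℝ) < 6 / m := by positivity
      nlinarith

theorem cube_net (d m : ℕ) (hm : 0 < m) :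
    ∃ Y : (Fin (d+1) × Bool × (Fin d → Fin m)) → EuclideanSpace ℝ (Fin (d+1)),
      (∀ i, ‖Y i‖ ≤ 3 * (d + 1)) ∧
      ∀ z : EuclideanSpace ℝ (Fin (d+1)), ‖(WithLp.ofLp z : Fin (d+1) → ℝ)‖ = 3 →
        ∃ i, ‖Y i - z‖ ≤ 6 * (d + 1) / m := by
  have hm' : (0:ℝ) < m := by exact_mod_cast hm
  refine ⟨fun i => WithLp.toLp 2 (i.1.insertNth (if i.2.1 then (3:ℝ) else -3)
    (fun j => -3 + 6 * (i.2.2 j : ℝ) / m) : Fin (d+1) → ℝ), ?_, ?_⟩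
  · rintro ⟨i, b, g⟩
    have := norm_le_of_coord (WithLp.toLp 2 (i.insertNth (if b then (3:ℝ) else -3)
      (fun j => -3 + 6 * (g j : ℝ) / m) : Fin (d+1) → ℝ)) 3 ?_
    · linarith
    · intro j
      refine Fin.succAboveCases i ?_ ?_ j
      · simp; split_ifs <;> simp
      · intro k
        simp only [Fin.insertNth_apply_succAbove]
        have h1 : (g k : ℝ) ≤ m := by exact_mod_cast (g k).2.le
        have h2 : (g k : ℝ) / m ≤ 1 := by rw [div_le_one hm']; exact h1
        have h3 : 0 ≤ (g k : ℝ) / m := by positivity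
        rw [mul_div_assoc, abs_le]; constructor <;> linarith
  · intro z hz
    have hle : ∀ i, |z i| ≤ 3 := fun i => by
      have := norm_le_pi_norm (WithLp.ofLp z : Fin (d+1) → ℝ) i
      rw [hz] at this; exact this
    obtain ⟨i, hi⟩ : ∃ i, |z i| = 3 := by
      by_contra! hh
      have : ‖(WithLp.ofLp z : Fin (d+1) → ℝ)‖ < 3 := by
        rw [pi_norm_lt_iff (by norm_num)]
        intro i; exact lt_of_le_of_ne (hle i) (hh i)
      linarith
    choose g hg using fun j : Fin d => grid m hm (z (i.succAbove j)) (hle _)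
    have hb : ∃ b : Bool, z i = if b then (3:ℝ) else -3 := by
      rcases (abs_eq (by norm_num)).1 hi with h | h
      · exact ⟨true, by simp [h]⟩
      · exact ⟨false, by simp [h]⟩
    obtain ⟨b, hb⟩ := hb
    refine ⟨⟨i, b, g⟩, ?_⟩
    refine (norm_le_of_coord _ (6 / m) ?_).trans (le_of_eq (by ring))
    intro j
    refine Fin.succAboveCases i ?_ ?_ j
    · simp only [PiLp.sub_apply, Fin.insertNth_apply_same, hb, sub_self, abs_zero]; positivity
    · intro k
      simpa using hg k

theorem ray_hit {d : ℕ} (q v : EuclideanSpace ℝ (Fin (d+1))) (hq : ‖q‖ ≤ 1) (hv : ‖v‖ = 1) :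
    ∃ t : ℝ, 2 ≤ t ∧ ‖(WithLp.ofLp (q + t • v) : Fin (d+1) → ℝ)‖ = 3 := by
  have hsup : ∀ x : EuclideanSpace ℝ (Fin (d+1)), ‖(WithLp.ofLp x : Fin (d+1) → ℝ)‖ ≤ ‖x‖ := by
    intro x
    rw [pi_norm_le_iff_of_nonneg (norm_nonneg _)]
    intro i; exact PiLp.norm_apply_le x i
  have hsup2 : ∀ x : EuclideanSpace ℝ (Fin (d+1)), ‖x‖ ≤ (d+1) * ‖(WithLp.ofLp x : Fin (d+1) → ℝ)‖ := by
    intro x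
    exact norm_le_of_coord x _ (fun i => norm_le_pi_norm (WithLp.ofLp x : Fin (d+1) → ℝ) i)
  let f : ℝ → ℝ := fun t => ‖(WithLp.ofLp (q + t • v) : Fin (d+1) → ℝ)‖
  have hf : Continuous f := by
    have : Continuous (fun x : EuclideanSpace ℝ (Fin (d+1)) => (WithLp.ofLp x : Fin (d+1) → ℝ)) :=
      PiLp.continuous_ofLp 2 _
    exact (this.comp (by fun_prop : Continuous fun t : ℝ => q + t • v)).norm
  have h0 : f 0 ≤ 3 := by
    have := hsup q
    simp only [f, zero_smul, add_zero]; linarith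
  have hb : 3 ≤ f (3 * (d + 1) + 1) := by
    have h1 := hsup2 (q + (3 * (d + 1) + 1 : ℝ) • v)
    have h2 := norm_sub_le (q + (3 * (d + 1) + 1 : ℝ) • v) q
    rw [add_sub_cancel_left, norm_smul, hv, Real.norm_of_nonneg (by positivity)] at h2
    have h3 : (d + 1 : ℝ) * 3 ≤ (d+1) * f (3 * (d + 1) + 1) := by simp only [f]; linarith
    exact le_of_mul_le_mul_left h3 (by positivity)
  obtain ⟨t, ht, hft⟩ := intermediate_value_Icc (by positivity) hf.continuousOn ⟨h0, hb⟩
  refine ⟨t, ?_, hft⟩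
  have h1 := hsup (q + t • v)
  have h2 := norm_add_le q (t • v)
  rw [norm_smul, hv, Real.norm_of_nonneg ht.1] at h2
  have : ‖(WithLp.ofLp (q + t • v) : Fin (d+1) → ℝ)‖ = 3 := hft
  linarith

/-- nonempty closed convex subset of the unit ball -/
def Good {d : ℕ} (K : Set (EuclideanSpace ℝ (Fin (d+1)))) : Prop :=
  K.Nonempty ∧ IsClosed K ∧ Convex ℝ K ∧ K ⊆ Metric.closedBall 0 1

theorem refine_near {d : ℕ} {ι : Type*} {K L : Set (EuclideanSpace ℝ (Fin (d+1)))}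
    (hK : Good K) (hL : Good L)
    (Y : ι → EuclideanSpace ℝ (Fin (d+1))) (P P' : ι → EuclideanSpace ℝ (Fin (d+1)))
    (ρ D : ℝ) (hD : 0 ≤ D) (hρ : ρ ≤ 1 / 3)
    (hY : ∀ z : EuclideanSpace ℝ (Fin (d+1)), ‖(WithLp.ofLp z : Fin (d+1) → ℝ)‖ = 3 →
        ∃ i, ‖Y i - z‖ ≤ ρ)
    (hP : ∀ i, IsPr K (Y i) (P i)) (hP' : ∀ i, IsPr L (Y i) (P' i))
    (hDP : ∀ i, ‖Y i - P i‖ ≤ D) (hDP' : ∀ i, ‖Y i - P' i‖ ≤ D)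
    (h1 : ∀ i, ‖P i - P' i‖ ≤ ρ) (h2 : ∀ i, ‖Y i - P i‖ ≤ ‖Y i - P' i‖ + ρ ^ 2) :
    Near ((D + 3) * ρ ^ 2) L K := by
  intro x hx
  obtain ⟨q, hq⟩ := IsPr.exists' hK.1 hK.2.1 hK.2.2.1 x
  refine ⟨q, hq.1, ?_⟩
  by_cases hxq : x = q
  · rw [hxq, sub_self, norm_zero]; positivity
  have hs : 0 < ‖x - q‖ := norm_pos_iff.2 (sub_ne_zero.2 hxq)
  set s := ‖x - q‖ with hs_def
  have hv : ‖s⁻¹ • (x - q)‖ = 1 := by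
    rw [norm_smul, norm_inv, Real.norm_of_nonneg hs.le, ← hs_def]; field_simp
  obtain ⟨t, ht, hz⟩ := ray_hit q (s⁻¹ • (x - q)) (mem_closedBall_zero_iff.1 (hK.2.2.2 hq.1)) hv
  obtain ⟨i, hi⟩ := hY _ hz
  refine key (K := K) (v := s⁻¹ • (x - q)) (t := t) (z := q + t • s⁻¹ • (x - q)) hx ?_ hv rfl ht
    hs.le ⟨hq.1, ?_⟩ (hP i) (hP' i) hi (h1 i) (h2 i) hρ (hDP i) (hDP' i)
  · rw [smul_smul, mul_inv_cancel₀ hs.ne', one_smul]; abel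
  · intro w hw
    rw [add_sub_cancel_left, smul_smul, inner_smul_left]
    have := hq.2 w hw
    have h3 : 0 ≤ t * s⁻¹ := by positivity
    simp only [conj_trivial]
    exact mul_nonpos_of_nonneg_of_nonpos h3 this

theorem main_code (d : ℕ) (hd : 1 ≤ d) : ∃ T B : ℕ, 2 ≤ T ∧ 1 ≤ B ∧ ∀ k : ℕ,
    ∃ (ι : Type) (_ : Fintype ι) (c : Set (EuclideanSpace ℝ (Fin (d+1))) → ι),
      Fintype.card ι ≤ T ^ (B * 2 ^ (k * d)) ∧
      ∀ K L, Good K → Good L → c K = c L → Near (2 * ((2:ℝ)⁻¹ ^ k) ^ 2) K L := by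
  set D : ℝ := 3 * (d + 1) + 1 with hDdef
  have hD1 : 1 ≤ D := by rw [hDdef]; have : (0:ℝ) ≤ d := by positivity
                         linarith
  set ρ₀ : ℝ := 1 / (2 * (D + 3)) with hρ₀
  have hρpos : 0 < ρ₀ := by positivity
  have hρ3 : ρ₀ ≤ 1 / 3 := by
    rw [hρ₀]; apply one_div_le_one_div_of_le <;> linarith
  have hρsq : (D + 3) * ρ₀ ^ 2 ≤ 1 / 2 := by
    have : (D + 3) * ρ₀ = 1 / 2 := by rw [hρ₀]; field_simp
    nlinarith
  obtain ⟨m₀, hm₀⟩ := exists_nat_gt (6 * (d + 1) / ρ₀)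
  have hm₀R : (0:ℝ) < m₀ := lt_trans (by positivity) hm₀
  have hm₀pos : 0 < m₀ := by exact_mod_cast hm₀R
  set η : ℝ := ρ₀ ^ 2 / (2 * D) with hη
  have hηpos : 0 < η := by positivity
  obtain ⟨T, cc, hT, hcc⟩ := code_exists (W := EuclideanSpace ℝ (Fin (d+1)) × ℝ) η hηpos
  refine ⟨T, (d + 1) * (2 * m₀ ^ d), hT, Nat.mul_pos (by omega) (by positivity), ?_⟩
  intro k
  induction k with
  | zero =>
    refine ⟨Unit, inferInstance, fun _ => (), ?_, ?_⟩
    · simp only [Fintype.card_unit]; exact Nat.one_le_pow _ _ (by omega)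
    · intro K L hK hL _ x hx
      obtain ⟨y, hy⟩ := hL.1
      refine ⟨y, hy, ?_⟩
      have h1 := mem_closedBall_zero_iff.1 (hK.2.2.2 hx)
      have h2 := mem_closedBall_zero_iff.1 (hL.2.2.2 hy)
      have := norm_sub_le x y
      simp only [pow_zero]; linarith
  | succ k ih =>
    obtain ⟨ι, _, c, hcard, hc⟩ := ih
    set s : ℝ := (2:ℝ)⁻¹ ^ k with hs
    have hspos : 0 < s := by positivity
    have hs1 : s ≤ 1 := pow_le_one₀ (by norm_num) (by norm_num)
    obtain ⟨Y, hYn, hY⟩ := cube_net d (2 ^ k * m₀) (by positivity)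
    -- projections
    have hpr : ∀ (K : Set (EuclideanSpace ℝ (Fin (d+1)))) i, ∃ p, Good K → IsPr K (Y i) p := by
      intro K i
      by_cases hK : Good K
      · obtain ⟨p, hp⟩ := IsPr.exists' hK.1 hK.2.1 hK.2.2.1 (Y i)
        exact ⟨p, fun _ => hp⟩
      · exact ⟨0, fun h => absurd h hK⟩
    choose P hP using hpr
    have hDP : ∀ K, Good K → ∀ i, ‖Y i - P K i‖ ≤ D := by
      intro K hK i
      have h1 := mem_closedBall_zero_iff.1 (hK.2.2.2 (hP K i hK).1)
      have h2 := norm_sub_le (Y i) (P K i)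
      have h3 := hYn i
      linarith
    -- representatives
    have hrep : ∀ a : ι, ∃ K₀, ∀ K, Good K → c K = a → Good K₀ ∧ c K₀ = a := by
      intro a
      by_cases h : ∃ K₀, Good K₀ ∧ c K₀ = a
      · obtain ⟨K₀, h⟩ := h; exact ⟨K₀, fun _ _ _ => h⟩
      · exact ⟨∅, fun K h1 h2 => absurd ⟨K, h1, h2⟩ h⟩
    choose rep hrep using hrep
    let vec : Set (EuclideanSpace ℝ (Fin (d+1))) → _ → EuclideanSpace ℝ (Fin (d+1)) × ℝ :=
      fun K i => ((2 * D * s)⁻¹ • (P K i - P (rep (c K)) i),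
        (2 * s ^ 2)⁻¹ * (‖Y i - P K i‖ - ‖Y i - P (rep (c K)) i‖))
    have hvec : ∀ K, Good K → ∀ i, ‖vec K i‖ ≤ 1 := by
      intro K hK i
      obtain ⟨hR, hcR⟩ := hrep _ K hK rfl
      have n1 := hc K _ hK hR hcR.symm
      have n2 := hc _ K hR hK hcR
      have a1 := stab (hP K i hK) (hP _ i hR) n2 n1 (hDP K hK i) (hDP _ hR i)
      have a2 := stab_dist (hP K i hK) (hP _ i hR) n2
      have a3 := stab_dist (hP _ i hR) (hP K i hK) n1
      rw [Prod.norm_def]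
      apply max_le
      · simp only [vec]
        rw [norm_smul, norm_inv, Real.norm_of_nonneg (by positivity), inv_mul_le_iff₀ (by positivity),
          mul_one]
        refine le_of_sq_le_sq ?_ (by positivity) |> fun h => h
        refine a1.trans ?_
        have : D * s ^ 2 ≤ D ^ 2 * s ^ 2 := by gcongr; nlinarith
        nlinarith
      · simp only [vec]
        rw [norm_mul, norm_inv, Real.norm_of_nonneg (by positivity), inv_mul_le_iff₀ (by positivity),
          mul_one, Real.norm_eq_abs, abs_le]
        constructor <;> linarith
    refine ⟨ι × ((Fin (d+1) × Bool × (Fin d → Fin (2 ^ k * m₀))) → Fin T), inferInstance,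
      fun K => (c K, fun i => cc (vec K i)), ?_, ?_⟩
    · simp only [Fintype.card_prod, Fintype.card_fun, Fintype.card_fin, Fintype.card_bool]
      have h2d : 2 ≤ 2 ^ d := by
        calc 2 = 2 ^ 1 := rfl
          _ ≤ 2 ^ d := Nat.pow_le_pow_right (by norm_num) hd
      calc _ ≤ T ^ ((d + 1) * (2 * m₀ ^ d) * 2 ^ (k * d)) * T ^ ((d + 1) * (2 * (2 ^ k * m₀) ^ d)) :=
            Nat.mul_le_mul_right _ hcard
        _ = T ^ (((d + 1) * (2 * m₀ ^ d) * 2 ^ (k * d)) * 2) := by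
            rw [← pow_add, mul_pow, ← pow_mul]; congr 1; ring
        _ ≤ T ^ (((d + 1) * (2 * m₀ ^ d) * 2 ^ (k * d)) * 2 ^ d) :=
            Nat.pow_le_pow_right (by omega) (Nat.mul_le_mul_left _ h2d)
        _ = _ := by congr 1; ring
    · intro L K hL hK h
      simp only [Prod.mk.injEq] at h
      obtain ⟨hcLK, hf⟩ := h
      have hdiff : ∀ i, ‖vec L i - vec K i‖ ≤ η := fun i =>
        hcc _ _ (hvec L hL i) (hvec K hK i) (congrFun hf i)
      have d1 : ∀ i, ‖P K i - P L i‖ ≤ ρ₀ * s := by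
        intro i
        have := (norm_fst_le _).trans (hdiff i)
        simp only [vec, Prod.fst_sub, hcLK] at this
        rw [← smul_sub, sub_sub_sub_cancel_right, norm_smul, norm_inv,
          Real.norm_of_nonneg (by positivity), inv_mul_le_iff₀ (by positivity), norm_sub_rev] at this
        refine this.trans ?_
        have : 2 * D * s * η = ρ₀ ^ 2 * s := by rw [hη]; field_simp
        rw [this]; gcongr; nlinarith
      have d2 : ∀ i, ‖Y i - P K i‖ ≤ ‖Y i - P L i‖ + (ρ₀ * s) ^ 2 := by
        intro i
        have := (norm_snd_le _).trans (hdiff i)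
        simp only [vec, Prod.snd_sub, hcLK] at this
        rw [← mul_sub, sub_sub_sub_cancel_right, norm_mul, norm_inv,
          Real.norm_of_nonneg (by positivity), inv_mul_le_iff₀ (by positivity), Real.norm_eq_abs] at this
        have h3 := (abs_le.1 this).1
        have h4 : 2 * s ^ 2 * η ≤ (ρ₀ * s) ^ 2 := by
          have : 2 * s ^ 2 * η = (ρ₀ * s) ^ 2 / D := by rw [hη]; field_simp
          rw [this]; exact div_le_self (by positivity) hD1
        linarith
      have hY' : ∀ z : EuclideanSpace ℝ (Fin (d+1)), ‖(WithLp.ofLp z : Fin (d+1) → ℝ)‖ = 3 →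
          ∃ i, ‖Y i - z‖ ≤ ρ₀ * s := by
        intro z hz
        obtain ⟨i, hi⟩ := hY z hz
        refine ⟨i, hi.trans ?_⟩
        have h5 : (6 * (d + 1) : ℝ) ≤ ρ₀ * m₀ := by
          rw [div_lt_iff₀ hρpos] at hm₀; linarith
        have h6 : (2:ℝ) ^ k * s = 1 := by rw [hs, ← mul_pow]; norm_num
        push_cast
        rw [div_le_iff₀ (by positivity)]
        calc (6 * (d + 1) : ℝ) ≤ ρ₀ * m₀ := h5
          _ = ρ₀ * m₀ * ((2:ℝ) ^ k * s) := by rw [h6, mul_one]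
          _ = _ := by ring
      have := refine_near hK hL Y (P K) (P L) (ρ₀ * s) D (by linarith) (by nlinarith) hY'
        (fun i => hP K i hK) (fun i => hP L i hL) (hDP K hK) (hDP L hL) d1 d2
      intro x hx
      obtain ⟨x', hx', hle⟩ := this x hx
      refine ⟨x', hx', hle.trans ?_⟩
      rw [pow_succ (2:ℝ)⁻¹ k, ← hs]
      have : 0 < s ^ 2 := by positivity
      nlinarith

/-- **Theorem (Bronshtein).** For every `d ≥ 1` there are `c_d, ε₀ > 0` such that for every
`R > 0` and `0 < ε ≤ ε₀ R`, the closed convex subsets of the closed ball of radius `R` in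
`ℝ^{d+1}` admit an ε-cover in the Hausdorff distance of cardinality at most
`exp(c_d (R/ε)^{d/2})`. -/
theorem bronshtein_convex_sets_cover (d : ℕ) (hd : 1 ≤ d) :
    ∃ c > (0:ℝ), ∃ ε₀ > (0:ℝ), ∀ R > (0:ℝ), ∀ ε : ℝ, 0 < ε → ε ≤ ε₀ * R →
      ∃ (n : ℕ) (V : Fin n → Set (EuclideanSpace ℝ (Fin (d+1)))),
        (n : ℝ) ≤ Real.exp (c * (R / ε) ^ ((d : ℝ) / 2)) ∧
        ∀ K : Set (EuclideanSpace ℝ (Fin (d+1))),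
          IsClosed K → Convex ℝ K → K ⊆ Metric.closedBall 0 R →
          ∃ i, EMetric.hausdorffEdist K (V i) ≤ ENNReal.ofReal ε := by
  obtain ⟨T, B, hT, hB, hmain⟩ := main_code d hd
  have hTR : (2:ℝ) ≤ T := by exact_mod_cast hT
  have hlog : 0 < Real.log T := Real.log_pos (by linarith)
  have hBR : (1:ℝ) ≤ B := by exact_mod_cast hB
  refine ⟨2 * B * 8 ^ ((d:ℝ) / 2) * Real.log T, by positivity, 1, one_pos, ?_⟩
  intro R hR ε hε hεR
  rw [one_mul] at hεR
  have hx1 : 1 ≤ 2 * (R / ε) := by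
    have : 1 ≤ R / ε := by rw [le_div_iff₀ hε]; linarith
    linarith
  obtain ⟨k, hk1, hk2⟩ := exists_nat_pow_near hx1 (by norm_num : (1:ℝ) < 4)
  obtain ⟨ι, _, c, hcard, hc⟩ := hmain (k + 1)
  have hδ : 2 * ((2:ℝ)⁻¹ ^ (k+1)) ^ 2 * R ≤ ε := by
    have e : ((2:ℝ)⁻¹ ^ (k+1)) ^ 2 = (4 ^ (k+1))⁻¹ := by
      rw [← pow_mul, mul_comm, pow_mul, ← inv_pow]; norm_num
    rw [e]
    have h4 : (0:ℝ) < 4 ^ (k+1) := by positivity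
    have : 2 * R ≤ 4 ^ (k+1) * ε := by
      have : 2 * (R / ε) * ε = 2 * R := by field_simp
      nlinarith
    calc 2 * (4 ^ (k+1))⁻¹ * R = (4 ^ (k+1))⁻¹ * (2 * R) := by ring
      _ ≤ (4 ^ (k+1))⁻¹ * (4 ^ (k+1) * ε) := by gcongr
      _ = ε := by field_simp
  have hrep : ∀ a : ι, ∃ K₀, ∀ K : Set (EuclideanSpace ℝ (Fin (d+1))),
      Good K → c K = a → Good K₀ ∧ c K₀ = a := by
    intro a
    by_cases h : ∃ K₀, Good K₀ ∧ c K₀ = a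
    · obtain ⟨K₀, h⟩ := h; exact ⟨K₀, fun _ _ _ => h⟩
    · exact ⟨∅, fun K h1 h2 => absurd ⟨K, h1, h2⟩ h⟩
  choose rep hrep using hrep
  let W : Option ι → Set (EuclideanSpace ℝ (Fin (d+1))) := fun o =>
    o.elim ∅ (fun a => (fun x => R • x) '' rep a)
  refine ⟨Fintype.card (Option ι), fun i => W ((Fintype.equivFin (Option ι)).symm i), ?_, ?_⟩
  · set X := B * 2 ^ ((k + 1) * d) with hX
    have hX1 : 1 ≤ X := Nat.mul_pos hB (by positivity)
    have h1 : Fintype.card (Option ι) ≤ T ^ (2 * X) := by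
      rw [Fintype.card_option, two_mul, pow_add]
      have : 2 ≤ T ^ X := hT.trans (Nat.le_self_pow (by omega) T)
      nlinarith
    have h2 : ((2 * X : ℕ) : ℝ) ≤ 2 * B * 8 ^ ((d:ℝ) / 2) * (R / ε) ^ ((d:ℝ) / 2) := by
      have h3 : ((2:ℝ) ^ ((k + 1) * d)) ≤ 8 ^ ((d:ℝ) / 2) * (R / ε) ^ ((d:ℝ) / 2) := by
        rw [← Real.mul_rpow (by norm_num) (by positivity)]
        have e : (2:ℝ) ^ ((k + 1) * d) = ((4:ℝ) ^ (k+1)) ^ ((d:ℝ) / 2) := by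
          have e4 : (4:ℝ) ^ (k+1) = ((2:ℝ) ^ (k+1)) ^ (2:ℝ) := by
            rw [Real.rpow_two, ← pow_mul, mul_comm, pow_mul]; norm_num
          rw [e4, ← Real.rpow_mul (by positivity), pow_mul, ← Real.rpow_natCast _ d]
          congr 1; ring
        rw [e]
        apply Real.rpow_le_rpow (by positivity) _ (by positivity)
        rw [pow_succ]; linarith
      rw [hX]; push_cast
      calc (2 * (B * 2 ^ ((k + 1) * d)) : ℝ) = 2 * B * 2 ^ ((k + 1) * d) := by ring
        _ ≤ 2 * B * (8 ^ ((d:ℝ) / 2) * (R / ε) ^ ((d:ℝ) / 2)) := by gcongr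
        _ = _ := by ring
    calc ((Fintype.card (Option ι) : ℕ) : ℝ) ≤ (T : ℝ) ^ (2 * X) := by exact_mod_cast h1
      _ = Real.exp ((2 * X : ℕ) * Real.log T) := by
          rw [Real.exp_nat_mul, Real.exp_log (by linarith)]
      _ ≤ _ := by
          apply Real.exp_le_exp.2
          calc _ ≤ 2 * B * 8 ^ ((d:ℝ) / 2) * (R / ε) ^ ((d:ℝ) / 2) * Real.log T := by gcongr
            _ = _ := by ring
  · intro K hKc hKconv hKR
    by_cases hne : K.Nonempty
    swap
    · rw [Set.not_nonempty_iff_eq_empty] at hne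
      refine ⟨Fintype.equivFin _ none, ?_⟩
      apply EMetric.hausdorffEdist_le_of_mem_edist
      · intro x hx; rw [hne] at hx; exact absurd hx (Set.notMem_empty x)
      · intro x hx; simp [W] at hx
    set K' : Set (EuclideanSpace ℝ (Fin (d+1))) := (fun x => R • x) ⁻¹' K with hK'
    have hgood : Good K' := by
      refine ⟨?_, hKc.preimage (by fun_prop), ?_, ?_⟩
      · obtain ⟨x, hx⟩ := hne
        exact ⟨R⁻¹ • x, by simpa [hK', smul_smul, hR.ne'] using hx⟩
      · exact hKconv.linear_preimage (R • (LinearMap.id : EuclideanSpace ℝ (Fin (d+1)) →ₗ[ℝ] _))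
      · intro x hx
        have := mem_closedBall_zero_iff.1 (hKR hx)
        rw [norm_smul, Real.norm_of_nonneg hR.le] at this
        rw [mem_closedBall_zero_iff]
        by_contra! h
        nlinarith
    obtain ⟨hg, hce⟩ := hrep _ K' hgood rfl
    have n1 := hc _ _ hgood hg hce.symm
    have n2 := hc _ _ hg hgood hce
    refine ⟨Fintype.equivFin _ (some (c K')), ?_⟩
    simp only [Equiv.symm_apply_apply, W, Option.elim]
    have hscale : ∀ a b : EuclideanSpace ℝ (Fin (d+1)), ‖a - b‖ ≤ 2 * ((2:ℝ)⁻¹ ^ (k+1)) ^ 2 →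
        edist (R • a) (R • b) ≤ ENNReal.ofReal ε := by
      intro a b hab
      rw [edist_dist, dist_eq_norm, ← smul_sub, norm_smul, Real.norm_of_nonneg hR.le]
      apply ENNReal.ofReal_le_ofReal
      nlinarith
    apply EMetric.hausdorffEdist_le_of_mem_edist
    · intro x hx
      have hx' : R⁻¹ • x ∈ K' := by simpa [hK', smul_smul, hR.ne'] using hx
      obtain ⟨y, hy, hle⟩ := n1 _ hx'
      refine ⟨R • y, ⟨y, hy, rfl⟩, ?_⟩
      have := hscale _ _ hle
      rwa [smul_smul, mul_inv_cancel₀ hR.ne', one_smul] at this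
    · rintro _ ⟨y, hy, rfl⟩
      obtain ⟨x, hx, hle⟩ := n2 _ hy
      exact ⟨R • x, hx, hscale _ _ hle⟩
end

section
/- Let p ≥ 1 be a real number, k ≥ 1 an integer, 0 < ε ≤ 1, and A ≥ 1 an integer. Define δ_i := ε^{ p ((p+1)/(p+2))^{i−1} } for 1 ≤ i ≤ A+1, set u := δ_{A+1}, and assume u ≤ 2^{−2(p+1)²(p+2)}. Define a_i := ε^{1/k} · ε^{ −p (p+1)^{i−2}/(p+2)^{i−1} } for 1 ≤ i ≤ A, and ζ_i := √( ε^{1/k} δ_{i+1} / (δ_i a_i) ) for 1 ≤ i ≤ A. Then for every real γ ≥ 1, ∑_{α=1}^A ζ_α^γ ≤ 2 · u^{ γ / (2(p+1)²) }. -/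
open Real

theorem zsb_geom (A : ℕ) : ∑ α ∈ Finset.Icc 1 A, (1 / 2 : ℝ) ^ (A - α) ≤ 2 := by
  induction A with
  | zero => simp
  | succ n ih =>
    rw [Finset.sum_Icc_succ_top (by omega)]
    have h : ∑ α ∈ Finset.Icc 1 n, (1 / 2 : ℝ) ^ (n + 1 - α)
        = (1 / 2) * ∑ α ∈ Finset.Icc 1 n, (1 / 2 : ℝ) ^ (n - α) := by
      rw [Finset.mul_sum]
      refine Finset.sum_congr rfl fun x hx => ?_
      rw [Finset.mem_Icc] at hx
      rw [Nat.sub_add_comm hx.2, pow_succ]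
      ring
    rw [h]
    simp only [Nat.sub_self, pow_zero]
    linarith

/-- **Lemma (geometric-sum bound for the ζ sequence).** With
`δ_i = ε^{p((p+1)/(p+2))^{i-1}}`, `u = δ_{A+1} ≤ 2^{-2(p+1)²(p+2)}`,
`a_i = ε^{1/k} ε^{-p(p+1)^{i-2}/(p+2)^{i-1}}` and `ζ_i = √(ε^{1/k} δ_{i+1}/(δ_i a_i))`,
one has `∑_{α=1}^A ζ_α^γ ≤ 2 u^{γ/(2(p+1)²)}` for every `γ ≥ 1`. -/
theorem zeta_sum_bound (p : ℝ) (hp : 1 ≤ p) (k A : ℕ) (hk : 1 ≤ k) (hA : 1 ≤ A)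
    (ε : ℝ) (hε : 0 < ε) (hε1 : ε ≤ 1)
    (δ : ℕ → ℝ) (hδ : ∀ i, δ i = ε ^ (p * ((p + 1) / (p + 2)) ^ ((i : ℝ) - 1)))
    (u : ℝ) (hu : u = δ (A + 1))
    (hu2 : u ≤ (2 : ℝ) ^ (-(2 * (p + 1) ^ 2 * (p + 2))))
    (a : ℕ → ℝ)
    (ha : ∀ i, a i = ε ^ (1 / (k : ℝ)) *
      ε ^ (-(p * (p + 1) ^ ((i : ℝ) - 2) / (p + 2) ^ ((i : ℝ) - 1))))
    (ζ : ℕ → ℝ)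
    (hζ : ∀ i, ζ i = Real.sqrt (ε ^ (1 / (k : ℝ)) * δ (i + 1) / (δ i * a i))) :
    ∀ γ : ℝ, 1 ≤ γ →
      ∑ α ∈ Finset.Icc 1 A, ζ α ^ γ ≤ 2 * u ^ (γ / (2 * (p + 1) ^ 2)) := by
  intro γ hγ
  have hp1 : 0 < p + 1 := by linarith
  have hp2 : 0 < p + 2 := by linarith
  set r : ℝ := (p + 1) / (p + 2) with hr
  have hr0 : 0 < r := by positivity
  have hδ1 : ∀ i : ℕ, δ (i + 1) = ε ^ (p * r ^ i) := by
    intro i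
    rw [hδ]
    push_cast
    rw [add_sub_cancel_right, rpow_natCast]
  set s : ℝ := γ / (2 * (p + 1) ^ 2) with hs
  have hs0 : 0 < s := by positivity
  have hu' : u = ε ^ (p * r ^ A) := by rw [hu, hδ1]
  have hu0 : 0 < u := by rw [hu']; positivity
  have hz : ∀ i : ℕ, 1 ≤ i → ζ i ^ γ = ε ^ (p * r ^ i * s) := by
    intro i hi
    obtain ⟨j, rfl⟩ : ∃ j, i = j + 1 := ⟨i - 1, by omega⟩
    have h1 : (p + 1) ^ (((j + 1 : ℕ) : ℝ) - 2) = (p + 1) ^ j / (p + 1) := by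
      rw [show (((j + 1 : ℕ) : ℝ) - 2) = (j : ℝ) - 1 by push_cast; ring,
        rpow_sub hp1, rpow_natCast, rpow_one]
    have h2 : (p + 2) ^ (((j + 1 : ℕ) : ℝ) - 1) = (p + 2) ^ j := by
      rw [show (((j + 1 : ℕ) : ℝ) - 1) = (j : ℝ) by push_cast; ring, rpow_natCast]
    rw [hζ, hδ1, hδ1, ha, h1, h2, sqrt_eq_rpow, ← rpow_add hε, ← rpow_add hε, ← rpow_add hε,
      ← rpow_sub hε, ← rpow_mul hε.le, ← rpow_mul hε.le]
    congr 1
    rw [hs, hr, div_pow, div_pow]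
    field_simp
    ring
  have hhalf : u ^ (s / (p + 1)) ≤ 1 / 2 := by
    calc u ^ (s / (p + 1)) ≤ ((2 : ℝ) ^ (-(2 * (p + 1) ^ 2 * (p + 2)))) ^ (s / (p + 1)) :=
          rpow_le_rpow hu0.le hu2 (by positivity)
      _ = (2 : ℝ) ^ (-((p + 2) * γ / (p + 1))) := by
          rw [← rpow_mul (by norm_num)]
          congr 1
          rw [hs]
          field_simp
      _ ≤ (2 : ℝ) ^ (-1 : ℝ) := by
          apply rpow_le_rpow_of_exponent_le (by norm_num)
          rw [neg_le_neg_iff, le_div_iff₀ hp1]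
          nlinarith
      _ = 1 / 2 := by rw [rpow_neg_one]; norm_num
  have key : ∀ α ∈ Finset.Icc 1 A, ζ α ^ γ ≤ u ^ s * (1 / 2 : ℝ) ^ (A - α) := by
    intro α hα
    rw [Finset.mem_Icc] at hα
    obtain ⟨j, rfl⟩ : ∃ j, A = α + j := ⟨A - α, by omega⟩
    rw [hz α hα.1, Nat.add_sub_cancel_left]
    have hb : r ^ (α + j) * (1 + j / (p + 1)) ≤ r ^ α := by
      have hbern := one_add_mul_le_pow (a := 1 / (p + 1))
        (by have : 0 < 1 / (p + 1) := by positivity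
            linarith) j
      have hri : r * (1 + 1 / (p + 1)) = 1 := by
        rw [hr]; field_simp; ring
      calc r ^ (α + j) * (1 + j / (p + 1)) ≤ r ^ (α + j) * (1 + 1 / (p + 1)) ^ j := by
            gcongr
            calc 1 + (j : ℝ) / (p + 1) = 1 + j * (1 / (p + 1)) := by ring
              _ ≤ _ := hbern
        _ = r ^ α * (r * (1 + 1 / (p + 1))) ^ j := by rw [pow_add, mul_pow]; ring
        _ = r ^ α := by rw [hri]; simp
    calc ε ^ (p * r ^ α * s) ≤ ε ^ (p * (r ^ (α + j) * (1 + j / (p + 1))) * s) := by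
          apply rpow_le_rpow_of_exponent_ge hε hε1
          gcongr
      _ = u ^ s * (u ^ (s / (p + 1))) ^ j := by
          rw [← rpow_natCast (u ^ (s / (p + 1))) j, ← rpow_mul hu0.le, ← rpow_add hu0, hu', ← rpow_mul hε.le]
          congr 1
          ring
      _ ≤ u ^ s * (1 / 2 : ℝ) ^ j := by
          gcongr
  calc ∑ α ∈ Finset.Icc 1 A, ζ α ^ γ ≤ ∑ α ∈ Finset.Icc 1 A, u ^ s * (1 / 2 : ℝ) ^ (A - α) :=
        Finset.sum_le_sum key
    _ = u ^ s * ∑ α ∈ Finset.Icc 1 A, (1 / 2 : ℝ) ^ (A - α) := by rw [Finset.mul_sum]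
    _ ≤ u ^ s * 2 := by
        have := zsb_geom A
        gcongr
    _ = 2 * u ^ s := by ring
end
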